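/- Let B₀, σ, l, R₀, γ, q be real numbers with σ > 0, q > 0 and c₀ ≠ 0. Define on ℝ² (writing r² = x₁² + x₂² and P = 1 + σr²/2): u₁(x) = B₀σ x₂ P^(−q−1), u₂(x) = −B₀σ x₁ P^(−q−1), and Π(x) = (1/c₀)·[ (B₀ l / q)·P^(−q) − (B₀²σ/(2q+1))·P^(−2q−1) ] + R₀. Then (u₁, u₂, Π) is a stationary solution of the 2D rotating compressible system: for all x ∈ ℝ², u₁∂₁u₁ + u₂∂₂u₁ − l u₂ + c₀ ∂₁Π = 0, u₁∂₁u₂ + u₂∂₂u₂ + l u₁ + c₀ ∂₂Π = 0, and u₁∂₁Π + u₂∂₂Π + (γ−1)·Π·(∂₁u₁ + ∂₂u₂) = 0. -/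

import Mathlib

namespace Stmt17

/-- `P = 1 + σ r² / 2`. -/
noncomputable def P (σ : ℝ) (x y : ℝ) : ℝ := 1 + σ * (x ^ 2 + y ^ 2) / 2

/-- Velocity component `u₁` of the power-law localized vortex. -/
noncomputable def u₁ (B₀ σ q : ℝ) (x y : ℝ) : ℝ :=
  B₀ * σ * y * P σ x y ^ (-(q + 1))

/-- Velocity component `u₂` of the power-law localized vortex. -/
noncomputable def u₂ (B₀ σ q : ℝ) (x y : ℝ) : ℝ :=
  -(B₀ * σ * x * P σ x y ^ (-(q + 1)))

/-- Pressure variable `Π` of the power-law localized vortex. -/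
noncomputable def Pi' (B₀ σ l c₀ R₀ q : ℝ) (x y : ℝ) : ℝ :=
  (1 / c₀) * (B₀ * l / q * P σ x y ^ (-q) -
    B₀ ^ 2 * σ / (2 * q + 1) * P σ x y ^ (-(2 * q + 1))) + R₀

/-!
A circular flow `(y w(s), -x w(s))` with `s = r² / 2` is divergence free and tangent to the level
sets of every radial function, so it transports no radial pressure. Its acceleration is the
centripetal one, `-w² (x, y)`, hence the momentum equations reduce to the single scalar balance
`c₀ g'(s) = w(s)² - l w(s)` for a pressure `g(s)`; `c₀` times the power-law pressure is a
primitive of the right-hand side for `w = B₀ σ (1 + σ s) ^ (-(q + 1))`.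
-/

/-- The stationary 2D rotating compressible system for the velocity `(u, v)` and the pressure
variable `p`, at the point `(x, y)`. Partial derivatives are encoded by `deriv`, so this is
meaningful only for fields with partial derivatives at `(x, y)`. -/
def IsStationaryAt (l c₀ γ : ℝ) (u v p : ℝ → ℝ → ℝ) (x y : ℝ) : Prop :=
  u x y * deriv (fun s => u s y) x + v x y * deriv (fun s => u x s) y -
    l * v x y + c₀ * deriv (fun s => p s y) x = 0 ∧
  u x y * deriv (fun s => v s y) x + v x y * deriv (fun s => v x s) y +
    l * u x y + c₀ * deriv (fun s => p x s) y = 0 ∧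
  u x y * deriv (fun s => p s y) x + v x y * deriv (fun s => p x s) y +
    (γ - 1) * p x y * (deriv (fun s => u s y) x + deriv (fun s => v x s) y) = 0

/-- The radial variable `r² / 2`; the factor `1 / 2` makes its gradient equal to `(x, y)`. -/
noncomputable def halfNormSq (x y : ℝ) : ℝ := (x ^ 2 + y ^ 2) / 2

section CircularFlow

variable {f : ℝ → ℝ} {f' x y : ℝ}

theorem halfNormSq_comm (x y : ℝ) : halfNormSq x y = halfNormSq y x := by
  simp only [halfNormSq, add_comm]

theorem hasDerivAt_comp_halfNormSq_left (hf : HasDerivAt f f' (halfNormSq x y)) :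
    HasDerivAt (fun t => f (halfNormSq t y)) (x * f') x := by
  have hs : HasDerivAt (fun t => halfNormSq t y) x x :=
    (((hasDerivAt_pow 2 x).add_const (y ^ 2)).div_const 2).congr_deriv (by norm_num)
  exact (hf.comp x hs).congr_deriv (mul_comm f' x)

theorem hasDerivAt_comp_halfNormSq_right (hf : HasDerivAt f f' (halfNormSq x y)) :
    HasDerivAt (fun t => f (halfNormSq x t)) (y * f') y := by
  simp only [halfNormSq_comm x] at hf ⊢
  exact hasDerivAt_comp_halfNormSq_left hf

theorem isStationaryAt_circularFlow {l c₀ γ w' g' : ℝ} {w g : ℝ → ℝ}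
    (hw : HasDerivAt w w' (halfNormSq x y)) (hg : HasDerivAt g g' (halfNormSq x y))
    (balance : c₀ * g' = w (halfNormSq x y) ^ 2 - l * w (halfNormSq x y)) :
    IsStationaryAt l c₀ γ (fun x y => y * w (halfNormSq x y))
      (fun x y => -(x * w (halfNormSq x y))) (fun x y => g (halfNormSq x y)) x y := by
  have hw_x := hasDerivAt_comp_halfNormSq_left hw
  have hw_y := hasDerivAt_comp_halfNormSq_right hw
  have hu_x := (hw_x.const_mul y).deriv
  have hu_y := ((hasDerivAt_id' y).fun_mul hw_y).deriv
  have hv_x := ((hasDerivAt_id' x).fun_mul hw_x).fun_neg.deriv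
  have hv_y := (hw_y.const_mul x).fun_neg.deriv
  have hp_x := (hasDerivAt_comp_halfNormSq_left hg).deriv
  have hp_y := (hasDerivAt_comp_halfNormSq_right hg).deriv
  unfold IsStationaryAt
  rw [hu_x, hu_y, hv_x, hv_y, hp_x, hp_y]
  refine ⟨?_, ?_, ?_⟩
  · linear_combination x * balance
  · linear_combination y * balance
  · ring

end CircularFlow

section PowerLaw

variable {B₀ σ l c₀ R₀ q s : ℝ}

/-- The rotation rate `w` of the power-law vortex `(y w, -x w)`, as a function of `s = r² / 2`. -/
noncomputable def rotationProfile (B₀ σ q s : ℝ) : ℝ := B₀ * σ * (1 + σ * s) ^ (-(q + 1))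

/-- The pressure variable of the power-law vortex, as a function of `s = r² / 2`. -/
noncomputable def pressureProfile (B₀ σ l c₀ R₀ q s : ℝ) : ℝ :=
  (1 / c₀) * (B₀ * l / q * (1 + σ * s) ^ (-q) -
    B₀ ^ 2 * σ / (2 * q + 1) * (1 + σ * s) ^ (-(2 * q + 1))) + R₀

theorem hasDerivAt_one_add_mul_rpow (a : ℝ) (hs : 1 + σ * s ≠ 0) :
    HasDerivAt (fun t => (1 + σ * t) ^ a) (σ * a * (1 + σ * s) ^ (a - 1)) s :=
  ((hasDerivAt_const_mul σ).const_add 1).rpow_const (.inl hs)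

theorem hasDerivAt_rotationProfile (hs : 1 + σ * s ≠ 0) :
    HasDerivAt (rotationProfile B₀ σ q)
      (B₀ * σ * (σ * -(q + 1) * (1 + σ * s) ^ (-(q + 1) - 1))) s :=
  (hasDerivAt_one_add_mul_rpow (-(q + 1)) hs).const_mul (B₀ * σ)

theorem hasDerivAt_pressureProfile (hq : q ≠ 0) (hq' : 2 * q + 1 ≠ 0) (hs : 0 < 1 + σ * s) :
    HasDerivAt (pressureProfile B₀ σ l c₀ R₀ q)
      ((1 / c₀) * (rotationProfile B₀ σ q s ^ 2 - l * rotationProfile B₀ σ q s)) s := by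
  have coriolis_exponent : (1 + σ * s) ^ (-q - 1) = (1 + σ * s) ^ (-(q + 1)) := by
    rw [neg_add']
  have centripetal_exponent :
      (1 + σ * s) ^ (-(2 * q + 1) - 1) = ((1 + σ * s) ^ (-(q + 1))) ^ 2 := by
    rw [← Real.rpow_mul_natCast hs.le]
    congr 1
    push_cast
    ring
  have h := ((((hasDerivAt_one_add_mul_rpow (-q) hs.ne').const_mul (B₀ * l / q)).fun_sub
    ((hasDerivAt_one_add_mul_rpow (-(2 * q + 1)) hs.ne').const_mul
      (B₀ ^ 2 * σ / (2 * q + 1)))).const_mul (1 / c₀)).add_const R₀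
  refine h.congr_deriv ?_
  rw [coriolis_exponent, centripetal_exponent, rotationProfile]
  have coriolis_coeff : B₀ * l / q * q = B₀ * l := div_mul_cancel₀ _ hq
  have centripetal_coeff : B₀ ^ 2 * σ / (2 * q + 1) * (2 * q + 1) = B₀ ^ 2 * σ :=
    div_mul_cancel₀ _ hq'
  linear_combination (1 / c₀) * σ * ((1 + σ * s) ^ (-(q + 1))) ^ 2 * centripetal_coeff -
    (1 / c₀) * σ * (1 + σ * s) ^ (-(q + 1)) * coriolis_coeff

end PowerLaw

section Vortex

variable (B₀ σ l c₀ R₀ q : ℝ)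

theorem P_eq_one_add_mul_halfNormSq (x y : ℝ) : P σ x y = 1 + σ * halfNormSq x y := by
  rw [P, halfNormSq, mul_div_assoc]

theorem P_pos {σ : ℝ} (hσ : 0 < σ) (x y : ℝ) : 0 < P σ x y := by
  unfold P
  positivity

theorem u₁_eq_mul_rotationProfile :
    u₁ B₀ σ q = fun x y => y * rotationProfile B₀ σ q (halfNormSq x y) := by
  funext x y
  rw [u₁, rotationProfile, P_eq_one_add_mul_halfNormSq]
  ring

theorem u₂_eq_neg_mul_rotationProfile :
    u₂ B₀ σ q = fun x y => -(x * rotationProfile B₀ σ q (halfNormSq x y)) := by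
  funext x y
  rw [u₂, rotationProfile, P_eq_one_add_mul_halfNormSq]
  ring

theorem Pi'_eq_pressureProfile :
    Pi' B₀ σ l c₀ R₀ q = fun x y => pressureProfile B₀ σ l c₀ R₀ q (halfNormSq x y) := by
  funext x y
  rw [Pi', pressureProfile, P_eq_one_add_mul_halfNormSq]

end Vortex

theorem stmt_17_general {B₀ σ l R₀ γ q c₀ x y : ℝ} (hq : q ≠ 0) (hq' : 2 * q + 1 ≠ 0)
    (hc₀ : c₀ ≠ 0) (hP : 0 < P σ x y) :
    IsStationaryAt l c₀ γ (u₁ B₀ σ q) (u₂ B₀ σ q) (Pi' B₀ σ l c₀ R₀ q) x y := by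
  rw [P_eq_one_add_mul_halfNormSq] at hP
  rw [u₁_eq_mul_rotationProfile, u₂_eq_neg_mul_rotationProfile, Pi'_eq_pressureProfile]
  exact isStationaryAt_circularFlow (hasDerivAt_rotationProfile hP.ne')
    (hasDerivAt_pressureProfile hq hq' hP) (by field_simp)

/-- The power-law decaying vortex
`u₁ = B₀σ x₂ P^(−q−1)`, `u₂ = −B₀σ x₁ P^(−q−1)`,
`Π = (1/c₀)[(B₀ l/q) P^(−q) − (B₀²σ/(2q+1)) P^(−2q−1)] + R₀`, with `P = 1 + σr²/2`,
is a stationary solution of the 2D rotating compressible system. -/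
theorem stmt_17 (B₀ σ l R₀ γ q c₀ : ℝ) (hσ : 0 < σ) (hq : 0 < q) (hc₀ : c₀ ≠ 0) :
    ∀ x y : ℝ,
      u₁ B₀ σ q x y * deriv (fun s => u₁ B₀ σ q s y) x +
        u₂ B₀ σ q x y * deriv (fun s => u₁ B₀ σ q x s) y -
        l * u₂ B₀ σ q x y + c₀ * deriv (fun s => Pi' B₀ σ l c₀ R₀ q s y) x = 0 ∧
      u₁ B₀ σ q x y * deriv (fun s => u₂ B₀ σ q s y) x +
        u₂ B₀ σ q x y * deriv (fun s => u₂ B₀ σ q x s) y +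
        l * u₁ B₀ σ q x y + c₀ * deriv (fun s => Pi' B₀ σ l c₀ R₀ q x s) y = 0 ∧
      u₁ B₀ σ q x y * deriv (fun s => Pi' B₀ σ l c₀ R₀ q s y) x +
        u₂ B₀ σ q x y * deriv (fun s => Pi' B₀ σ l c₀ R₀ q x s) y +
        (γ - 1) * Pi' B₀ σ l c₀ R₀ q x y *
          (deriv (fun s => u₁ B₀ σ q s y) x + deriv (fun s => u₂ B₀ σ q x s) y) = 0 :=
  fun x y => stmt_17_general hq.ne' (by positivity) hc₀ (P_pos hσ x y)

end Stmt17
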